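/- Assuming every set of 10 points in general position determines a 5-hole, every set of n points in general position in the plane determines at least c·n²/L(P) distinct 5-holes for some absolute constant c > 0, where L(P) denotes the number of convex layers of P; moreover the number of 5-holes is also at least c·|ℓ₁|·n, where ℓ₁ is the first (outermost) convex layer of P. -/

import Mathlib

open scoped Classical

noncomputable section

abbrev Pt : Type := EuclideanSpace ℝ (Fin 2)

/-- No three distinct points of `P` are collinear. -/
def GenPos (P : Set Pt) : Prop :=
  ∀ a ∈ P, ∀ b ∈ P, ∀ c ∈ P, a ≠ b → a ≠ c → b ≠ c → ¬ Collinear ℝ ({a, b, c} : Set Pt)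

/-- A set of points is in convex position if every point is an extreme point:
no point lies in the convex hull of the others. -/
def ConvexPos (S : Set Pt) : Prop := ∀ p ∈ S, p ∉ convexHull ℝ (S \ {p})

/-- The 5-holes of `P`: 5-element subsets of `P` in convex position whose
convex hull has no point of `P` in its interior. -/
def Holes5 (P : Set Pt) : Set (Finset Pt) :=
  {H | H.card = 5 ∧ ↑H ⊆ P ∧ ConvexPos ↑H ∧
    ∀ x ∈ P, x ∉ interior (convexHull ℝ (H : Set Pt))}

/-- Orientation determinant of the triple `(o, a, b)`. -/
def det2 (o a b : Pt) : ℝ :=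
  (a 0 - o 0) * (b 1 - o 1) - (a 1 - o 1) * (b 0 - o 0)

/-- `v` lists the vertices of a strictly convex polygon in cyclic order:
for every edge `v i v (i+1)`, all other vertices lie strictly on the same side. -/
def ConvexCyclicOrder {n : ℕ} [NeZero n] (v : Fin n → Pt) : Prop :=
  ∃ σ : ℝ, (σ = 1 ∨ σ = -1) ∧
    ∀ i j : Fin n, j ≠ i → j ≠ i + 1 → 0 < σ * det2 (v i) (v (i + 1)) (v j)

/-- `x` lies in the closed angular region at `p` spanned by the rays from `p`
through `a` and through `c` (the convex cone generated by the two rays). -/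
def InAngle (a p c x : Pt) : Prop :=
  ∃ s t : ℝ, 0 ≤ s ∧ 0 ≤ t ∧ x = p + s • (a - p) + t • (c - p)

/-- The extreme points (convex-hull vertices) of a planar point set. -/
def extremePts (P : Set Pt) : Set Pt := {p ∈ P | p ∉ convexHull ℝ (P \ {p})}

/-- What remains of `P` after peeling off the first `n` convex layers. -/
def layerRest (P : Set Pt) : ℕ → Set Pt
  | 0 => P
  | n + 1 => layerRest P n \ extremePts (layerRest P n)

/-- The `i`-th convex layer of `P` (0-indexed). -/
def layer (P : Set Pt) (i : ℕ) : Set Pt := extremePts (layerRest P i)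

/-- The number of convex layers of `P`. -/
def numLayers (P : Set Pt) : ℕ := {i | (layer P i).Nonempty}.ncard

/-!
Fix an extreme point `p` of `P` and list the other points by angle around `p`. Every block `W` of
ten consecutive points contains a 5-hole by Harborth's theorem, and from it one descends to a
5-hole that meets `W` and is charged to `p`, in the sense that `p` is one of its vertices or is
within few points of a ray through two of its vertices. For a hole `H` that is not charged to `p`
one drops the last vertex of `H` and adds two ears, one at each end of the remaining four
vertices. If the triangle formed by `p` and two of these vertices is empty, the two vertices, `p`
and two ears form a charged hole meeting `W`; otherwise the region spanned by `p`, the four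
vertices and the ears contains at least ten points, hence a 5-hole `H'`. Either `H'` is charged to
`p` and meets `W`, or the hull of `p` and `H'` contains fewer points than that of `p` and `H`.

A hole is charged to boundedly many points, and its five vertices meet at most five of the
`⌊(n - 1) / 10⌋` blocks around each of them, so `|ℓ₁| * n ≤ C * h` where `h` is the number of
5-holes. What remains after peeling off layers is an island, all of whose 5-holes are 5-holes of
`P`, so `|ℓᵢ| * nᵢ ≤ C * h` holds for each layer `ℓᵢ` and the number `nᵢ` of points left before it
is removed. Since `nᵢ ^ 2 - nᵢ₊₁ ^ 2 ≤ 2 * |ℓᵢ| * nᵢ`, summing over the layers gives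
`n ^ 2 ≤ 2 * L * C * h`.
-/

section Orientation

variable {e e' : ℤˣ} {o u a b c x y z : Pt} {P S : Set Pt}

/-- The orientation determinant of `(o, a, b)` multiplied by a sign `e`. Statements that hold
for every sign cover a configuration together with its mirror image. -/
def sdet (e : ℤˣ) (o a b : Pt) : ℝ := (e : ℤ) * det2 o a b

/-- The triangle `(o, a, b)` is counterclockwise if `e = 1` and clockwise if `e = -1`. Seen from
`o`, the point `b` then comes after `a` in the direction of rotation given by `e`. -/
def Turn (e : ℤˣ) (o a b : Pt) : Prop := 0 < sdet e o a b

lemma sdet_neg (e : ℤˣ) (o a b : Pt) : sdet (-e) o a b = -sdet e o a b := by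
  simp [sdet]

lemma sdet_swap (e : ℤˣ) (o a b : Pt) : sdet e o b a = -sdet e o a b := by
  simp only [sdet, det2]; ring

lemma sdet_rotate (e : ℤˣ) (o a b : Pt) : sdet e a b o = sdet e o a b := by
  simp only [sdet, det2]; ring

@[simp] lemma sdet_self_left (e : ℤˣ) (o a : Pt) : sdet e o o a = 0 := by
  simp [sdet, det2]

@[simp] lemma sdet_self_right (e : ℤˣ) (o a : Pt) : sdet e o a a = 0 := by
  simp only [sdet, det2]; ring

@[simp] lemma sdet_self_outer (e : ℤˣ) (o a : Pt) : sdet e o a o = 0 := by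
  simp [sdet, det2]

lemma sdet_affine_combination {s t : ℝ} (hst : s + t = 1) (e : ℤˣ) (o a x y : Pt) :
    sdet e o a (s • x + t • y) = s * sdet e o a x + t * sdet e o a y := by
  obtain rfl : t = 1 - s := by linarith
  simp only [sdet, det2, PiLp.add_apply, PiLp.smul_apply, smul_eq_mul]
  ring

lemma sdet_mul_sdet (e' e : ℤˣ) (o u x y z : Pt) :
    sdet e' o u y * sdet e o x z =
      sdet e' o u x * sdet e o y z + sdet e' o u z * sdet e o x y := by
  simp only [sdet, det2]; ring

lemma turn_neg : Turn (-e) o a b ↔ Turn e o b a := by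
  rw [Turn, Turn, sdet_neg, sdet_swap e o a b]

lemma turn_rotate : Turn e a b o ↔ Turn e o a b := by
  rw [Turn, Turn, sdet_rotate]

lemma not_turn : ¬ Turn e o b a ↔ 0 ≤ sdet e o a b := by
  rw [Turn, sdet_swap, not_lt, neg_nonpos]

namespace Turn

lemma ne₁₂ (h : Turn e o a b) : o ≠ a := by
  rintro rfl; simp [Turn] at h

lemma ne₁₃ (h : Turn e o a b) : o ≠ b := by
  rintro rfl; simp [Turn] at h

lemma ne₂₃ (h : Turn e o a b) : a ≠ b := by
  rintro rfl; simp [Turn] at h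

lemma not_swap (h : Turn e o a b) : ¬ Turn e o b a := not_turn.2 (le_of_lt h)

lemma trans (hx : Turn e' o u x) (hy : Turn e' o u y) (hz : Turn e' o u z)
    (hxy : Turn e o x y) (hyz : Turn e o y z) : Turn e o x z := by
  have h : 0 < sdet e' o u y * sdet e o x z := by
    rw [sdet_mul_sdet]
    exact add_pos (mul_pos hx hyz) (mul_pos hz hxy)
  exact (pos_iff_pos_of_mul_pos h).1 hy

lemma of_between (hx : Turn e' o u x) (hz : Turn e' o u z)
    (hxy : Turn e o x y) (hyz : Turn e o y z) (hxz : Turn e o x z) : Turn e' o u y := by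
  have h : 0 < sdet e' o u y * sdet e o x z := by
    rw [sdet_mul_sdet]
    exact add_pos (mul_pos hx hyz) (mul_pos hz hxy)
  exact (pos_iff_pos_of_mul_pos h).2 hxz

end Turn

lemma collinear_of_det2_eq_zero (h : det2 a b c = 0) : Collinear ℝ ({a, b, c} : Set Pt) := by
  rcases eq_or_ne a b with rfl | hab
  · simpa using collinear_pair ℝ a c
  suffices hc : ∃ r : ℝ, c = r • (b - a) + a by
    rw [collinear_iff_of_mem (p₀ := a) (by simp)]
    refine ⟨b - a, ?_⟩
    rintro q (rfl | rfl | rfl)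
    exacts [⟨0, by simp⟩, ⟨1, by simp⟩, hc]
  have hba : ∃ i, b i - a i ≠ 0 := by
    by_contra! hi
    exact hab (PiLp.ext fun i ↦ (sub_eq_zero.1 (hi i)).symm)
  obtain ⟨i, hi⟩ := hba
  refine ⟨(c i - a i) / (b i - a i), PiLp.ext fun j ↦ ?_⟩
  simp only [PiLp.add_apply, PiLp.smul_apply, PiLp.sub_apply, smul_eq_mul]
  rw [det2] at h
  fin_cases i <;> fin_cases j <;> simp only [Fin.zero_eta, Fin.mk_one] at hi ⊢ <;> field_simp <;>
    linarith

namespace GenPos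

lemma mono (h : GenPos P) (hS : S ⊆ P) : GenPos S :=
  fun a ha b hb c hc ↦ h a (hS ha) b (hS hb) c (hS hc)

lemma sdet_ne_zero (h : GenPos P) (ha : a ∈ P) (hb : b ∈ P) (hc : c ∈ P)
    (hab : a ≠ b) (hac : a ≠ c) (hbc : b ≠ c) : sdet e a b c ≠ 0 :=
  mul_ne_zero (by exact_mod_cast e.ne_zero)
    fun h0 ↦ h a ha b hb c hc hab hac hbc (collinear_of_det2_eq_zero h0)

lemma turn_of_sdet_nonneg (h : GenPos P) (ha : a ∈ P) (hb : b ∈ P) (hc : c ∈ P)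
    (hab : a ≠ b) (hac : a ≠ c) (hbc : b ≠ c) (h0 : 0 ≤ sdet e a b c) : Turn e a b c :=
  h0.lt_of_ne' (h.sdet_ne_zero ha hb hc hab hac hbc)

lemma turn_or_turn (h : GenPos P) (e : ℤˣ) (ha : a ∈ P) (hb : b ∈ P) (hc : c ∈ P)
    (hab : a ≠ b) (hac : a ≠ c) (hbc : b ≠ c) : Turn e a b c ∨ Turn e a c b := by
  have h0 := (h.sdet_ne_zero (e := e) ha hb hc hab hac hbc).lt_or_gt
  rw [Turn, Turn, sdet_swap e a b c, neg_pos]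
  exact h0.symm

end GenPos

end Orientation

section RotationalOrder

variable {e e' : ℤˣ} {o u p x y z : Pt} {P : Set Pt}

lemma GenPos.exists_equiv_turn (hP : GenPos P) (ho : o ∈ P) {S : Finset Pt} (hS : ↑S ⊆ P)
    (hu : ∀ w ∈ S, Turn e' o u w) (e : ℤˣ) {n : ℕ} (hn : S.card = n) :
    ∃ f : Fin n ≃ S, ∀ i j, i < j → Turn e o (f i) (f j) := by
  let r : S → S → Prop := fun v w ↦ Turn e o v w
  have : IsStrictTotalOrder S r :=
    { irrefl := fun v h ↦ h.ne₂₃ rfl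
      trans := fun v w t hvw hwt ↦
        Turn.trans (hu v v.2) (hu w w.2) (hu t t.2) hvw hwt
      trichotomous := fun v w hvw hwv ↦ by
        by_contra hne
        exact (hP.turn_or_turn e ho (hS v.2) (hS w.2) (hu v v.2).ne₁₃ (hu w w.2).ne₁₃
          (Subtype.coe_injective.ne hne)).elim hvw hwv }
  let := linearOrderOfSTO r
  let f := Fintype.orderIsoFinOfCardEq S ((Fintype.card_coe S).trans hn)
  exact ⟨f.toEquiv, fun i j hij ↦ f.lt_iff_lt.2 hij⟩

lemma GenPos.exists_first (hP : GenPos P) (ho : o ∈ P) {S : Finset Pt} (hS : ↑S ⊆ P)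
    (hu : ∀ w ∈ S, Turn e' o u w) (e : ℤˣ) (hne : S.Nonempty) :
    ∃ a ∈ S, ∀ k ∈ S, k ≠ a → Turn e o a k := by
  obtain ⟨f, hf⟩ := hP.exists_equiv_turn ho hS hu e rfl
  let i₀ : Fin S.card := ⟨0, hne.card_pos⟩
  refine ⟨f i₀, (f i₀).2, fun k hk hka ↦ ?_⟩
  have hlt : i₀ < f.symm ⟨k, hk⟩ := by
    refine Nat.pos_of_ne_zero fun h0 ↦ hka ?_
    have : f.symm ⟨k, hk⟩ = i₀ := Fin.ext h0
    rw [← this, Equiv.apply_symm_apply]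
  simpa using hf _ _ hlt

lemma exists_turn_of_mem_extremePts (hfin : P.Finite) (hp : p ∈ extremePts P) :
    ∃ u, ∀ x ∈ P, x ≠ p → Turn 1 p u x := by
  obtain ⟨f, r, hfp, hfx⟩ := geometric_hahn_banach_point_closed (convex_convexHull ℝ _)
    ((hfin.subset Set.sdiff_subset).isClosed_convexHull ℝ) hp.2
  have hf (v : Pt) : f v = v 0 * f !₂[1, 0] + v 1 * f !₂[0, 1] := by
    have hv : v = v 0 • (!₂[1, 0] : Pt) + v 1 • (!₂[0, 1] : Pt) := by
      ext i; fin_cases i <;> simp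
    conv_lhs => rw [hv]
    simp
  -- The line from `p` to `u` is the level set of `f` through `p`.
  refine ⟨!₂[p 0 + f !₂[0, 1], p 1 - f !₂[1, 0]], fun x hx hxp ↦ ?_⟩
  have hlt : f p < f x := hfp.trans (hfx x (subset_convexHull ℝ _ ⟨hx, hxp⟩))
  rw [hf p, hf x] at hlt
  simp only [Turn, sdet, det2, Units.val_one, Int.cast_one, one_mul, Matrix.cons_val_zero,
    Matrix.cons_val_one, Matrix.cons_val_fin_one]
  linarith

lemma Turn.trans_of_mem_extremePts (hfin : P.Finite) (hp : p ∈ extremePts P) (hx : x ∈ P)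
    (hy : y ∈ P) (hz : z ∈ P) (hxy : Turn e p x y) (hyz : Turn e p y z) : Turn e p x z := by
  obtain ⟨u, hu⟩ := exists_turn_of_mem_extremePts hfin hp
  exact Turn.trans (hu x hx hxy.ne₁₂.symm) (hu y hy hyz.ne₁₂.symm) (hu z hz hyz.ne₁₃.symm) hxy hyz

end RotationalOrder

section ConvexHull

variable {e : ℤˣ} {o a u p x y z w : Pt} {P Q S V : Set Pt}

lemma sdet_nonneg_of_mem_convexHull (h : ∀ v ∈ S, 0 ≤ sdet e o a v) (hz : z ∈ convexHull ℝ S) :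
    0 ≤ sdet e o a z := by
  refine convexHull_min (t := {v | 0 ≤ sdet e o a v}) h (fun v hv w hw s t hs ht hst ↦ ?_) hz
  rw [Set.mem_ofPred_eq, sdet_affine_combination hst]
  exact add_nonneg (mul_nonneg hs hv) (mul_nonneg ht hw)

lemma eq_or_turn_of_mem_convexHull (hw : sdet e o a w = 0) (h : ∀ v ∈ S, v = w ∨ Turn e o a v)
    (hz : z ∈ convexHull ℝ S) : z = w ∨ Turn e o a z := by
  refine convexHull_min (t := {v | v = w ∨ Turn e o a v}) h
    (convex_iff_forall_pos.2 fun x hx y hy s t hs ht hst ↦ ?_) hz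
  simp only [Set.mem_ofPred_eq, Turn] at hx hy ⊢
  rw [sdet_affine_combination hst]
  rcases hx with rfl | hx <;> rcases hy with rfl | hy
  · exact .inl (by rw [← add_smul, hst, one_smul])
  · exact .inr (by rw [hw]; positivity)
  · exact .inr (by rw [hw]; positivity)
  · exact .inr (by positivity)

lemma mem_extremePts_of_turn (ha : a ∈ Q) (hay : a ≠ y)
    (h : ∀ z ∈ Q, z ≠ a → z ≠ y → Turn e a y z) : a ∈ extremePts Q := by
  refine ⟨ha, fun hmem ↦ ?_⟩
  rcases eq_or_turn_of_mem_convexHull (sdet_self_right e a y)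
    (fun z hz ↦ or_iff_not_imp_left.2 (h z hz.1 hz.2)) hmem with hy | hturn
  exacts [hay hy, hturn.ne₁₃ rfl]

lemma mem_convexHull_triple (hT : 0 < sdet e p x y) (hy : 0 ≤ sdet e p x w)
    (hp : 0 ≤ sdet e x y w) (hx : 0 ≤ sdet e y p w) :
    w ∈ convexHull ℝ ({p, x, y} : Set Pt) := by
  set A := sdet e x y w with hA
  set B := sdet e y p w with hB
  set C := sdet e p x w with hC
  have hsum : A + B + C = sdet e p x y := by
    simp only [hA, hB, hC, sdet, det2]; ring
  refine mem_convexHull_of_exists_fintype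
    ![A / sdet e p x y, B / sdet e p x y, C / sdet e p x y] ![p, x, y] ?_ ?_ ?_ ?_
  · intro i
    fin_cases i <;> exact div_nonneg ‹_› hT.le
  · simp only [Fin.sum_univ_three, Matrix.cons_val]
    field_simp
    exact hsum
  · intro i
    fin_cases i <;> simp
  · ext i
    simp only [Fin.sum_univ_three, Matrix.cons_val, PiLp.add_apply, PiLp.smul_apply, smul_eq_mul]
    field_simp
    simp only [hA, hB, hC, sdet, det2]
    fin_cases i <;> simp only [Fin.zero_eta, Fin.mk_one] <;> ring

lemma extremePts_subset : extremePts P ⊆ P := fun _ h ↦ h.1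

lemma mem_extremePts_mono (hV : V ⊆ P) (hp : p ∈ V) (h : p ∈ extremePts P) : p ∈ extremePts V :=
  ⟨hp, fun hc ↦ h.2 (convexHull_mono (Set.sdiff_subset_sdiff_left hV) hc)⟩

lemma extremePts_nonempty (hfin : S.Finite) (hS : S.Nonempty) : (extremePts S).Nonempty := by
  obtain ⟨x, hx⟩ := (hfin.isCompact_convexHull ℝ).extremePoints_nonempty
    (convexHull_nonempty_iff.2 hS)
  refine ⟨x, extremePoints_convexHull_subset hx, fun hc ↦ ?_⟩
  rw [(convex_convexHull ℝ _).mem_extremePoints_iff_mem_sdiff_convexHull_sdiff] at hx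
  exact hx.2 (convexHull_mono (Set.sdiff_subset_sdiff_left (subset_convexHull ℝ _)) hc)

lemma mem_extremePoints_convexHull (hfin : S.Finite) (hx : x ∈ extremePts S) :
    x ∈ (convexHull ℝ S).extremePoints ℝ := by
  obtain ⟨u, hu⟩ := exists_turn_of_mem_extremePts hfin hx
  have hturn (z) (hz : z ∈ convexHull ℝ S) : z = x ∨ Turn 1 x u z :=
    eq_or_turn_of_mem_convexHull (sdet_self_outer 1 x u)
      (fun v hv ↦ or_iff_not_imp_left.2 (hu v hv)) hz
  rw [(convex_convexHull ℝ S).mem_extremePoints_iff_convex_sdiff]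
  refine ⟨subset_convexHull ℝ S hx.1, convex_iff_forall_pos.2 fun v hv w hw s t hs ht hst ↦
    ⟨convex_convexHull ℝ S hv.1 hw.1 hs.le ht.le hst, fun hvw ↦ ?_⟩⟩
  have hv' := (hturn v hv.1).resolve_left hv.2
  have hw' := (hturn w hw.1).resolve_left hw.2
  have h0 := sdet_affine_combination hst 1 x u v w
  rw [Set.mem_singleton_iff.1 hvw, sdet_self_outer] at h0
  exact h0.not_lt (add_pos (mul_pos hs hv') (mul_pos ht hw'))

lemma notMem_interior_of_mem_extremePts (hfin : S.Finite) (hx : x ∈ extremePts S) :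
    x ∉ interior (convexHull ℝ S) := fun hi ↦
  Set.disjoint_left.1 (disjoint_interior_extremePoints _) hi (mem_extremePoints_convexHull hfin hx)

end ConvexHull

section Islands

variable {p : Pt} {P Q R S : Set Pt}

/-- `Q` is an island of `P`: a subset of `P` whose convex hull contains no other points of `P`.
Every hole of an island is a hole of `P`. -/
def IsIsland (Q P : Set Pt) : Prop := Q ⊆ P ∧ ∀ x ∈ P, x ∈ convexHull ℝ Q → x ∈ Q

/-- The points of `P` in the convex hull of `S`, that is, the island of `P` spanned by `S`. -/
def hullPts (P : Finset Pt) (S : Set Pt) : Finset Pt := {z ∈ P | z ∈ convexHull ℝ S}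

lemma mem_hullPts {P : Finset Pt} {z : Pt} : z ∈ hullPts P S ↔ z ∈ P ∧ z ∈ convexHull ℝ S := by
  simp [hullPts]

lemma hullPts_subset (P : Finset Pt) (S : Set Pt) : hullPts P S ⊆ P := Finset.filter_subset _ _

lemma mem_hullPts_self {P : Finset Pt} {z : Pt} (hS : S ⊆ P) (hz : z ∈ S) : z ∈ hullPts P S :=
  mem_hullPts.2 ⟨hS hz, subset_convexHull ℝ S hz⟩

lemma hullPts_mono (P : Finset Pt) (h : S ⊆ convexHull ℝ R) : hullPts P S ⊆ hullPts P R :=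
  fun _ hz ↦ mem_hullPts.2 ⟨(mem_hullPts.1 hz).1,
    convexHull_min h (convex_convexHull ℝ R) (mem_hullPts.1 hz).2⟩

lemma hullPts_insert_subset {P : Finset Pt} {H : Set Pt} (hp : p ∈ S)
    (hH : H ⊆ hullPts P S) : hullPts P (insert p H) ⊆ hullPts P S :=
  hullPts_mono P <| Set.insert_subset (subset_convexHull ℝ S hp)
    fun _ hz ↦ (mem_hullPts.1 (hH hz)).2

lemma isIsland_hullPts (P : Finset Pt) (S : Set Pt) : IsIsland (hullPts P S) P :=
  ⟨hullPts_subset P S, fun _ hx hxS ↦ mem_hullPts.2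
    ⟨hx, convexHull_min (fun _ hz ↦ (mem_hullPts.1 hz).2) (convex_convexHull ℝ S) hxS⟩⟩

namespace IsIsland

lemma refl (P : Set Pt) : IsIsland P P := ⟨subset_rfl, fun _ hx _ ↦ hx⟩

lemma trans (hRQ : IsIsland R Q) (hQP : IsIsland Q P) : IsIsland R P :=
  ⟨hRQ.1.trans hQP.1, fun _ hx hxR ↦
    hRQ.2 _ (hQP.2 _ hx (convexHull_mono hRQ.1 hxR)) hxR⟩

lemma holes5_subset (h : IsIsland Q P) : Holes5 Q ⊆ Holes5 P := by
  rintro H ⟨hcard, hHQ, hconv, hempty⟩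
  exact ⟨hcard, hHQ.trans h.1, hconv, fun x hx hi ↦
    hempty x (h.2 x hx (convexHull_mono hHQ (interior_subset hi))) hi⟩

end IsIsland

lemma isIsland_sdiff_of_subset_extremePts (h : S ⊆ extremePts P) : IsIsland (P \ S) P :=
  ⟨Set.sdiff_subset, fun _ hx hxS ↦ ⟨hx, fun hxE ↦ (h hxE).2
    (convexHull_mono (Set.sdiff_subset_sdiff_right (Set.singleton_subset_iff.2 hxE)) hxS)⟩⟩

lemma mem_holes5_of_hullPts_subset {P H : Finset Pt} (hcard : H.card = 5) (hHP : H ⊆ P)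
    (hconv : ConvexPos H) (hempty : hullPts P H ⊆ H) : H ∈ Holes5 P :=
  ⟨hcard, hHP, hconv, fun _ hx hi ↦
    have hxH := hempty (mem_hullPts.2 ⟨hx, interior_subset hi⟩)
    notMem_interior_of_mem_extremePts H.finite_toSet ⟨hxH, hconv _ hxH⟩ hi⟩

lemma holes5_nonempty_of_le_card
    (harborth : ∀ Q : Finset Pt, Q.card = 10 → GenPos Q → (Holes5 Q).Nonempty)
    (Q : Finset Pt) (hQ : GenPos Q) (hcard : 10 ≤ Q.card) : (Holes5 (Q : Set Pt)).Nonempty := by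
  induction Q using Finset.strongInduction with
  | H Q ih =>
    rcases hcard.eq_or_lt with h10 | h10
    · exact harborth Q h10.symm hQ
    obtain ⟨p, hp⟩ := extremePts_nonempty Q.finite_toSet (Finset.card_pos.1 (by omega))
    have hisl : IsIsland (Q.erase p : Set Pt) Q := by
      rw [Finset.coe_erase]
      exact isIsland_sdiff_of_subset_extremePts (Set.singleton_subset_iff.2 hp)
    refine (ih _ (Finset.erase_ssubset hp.1) (hQ.mono hisl.1) ?_).mono hisl.holes5_subset
    rw [Finset.card_erase_of_mem hp.1]
    omega

end Islands

section Near

variable {e : ℤˣ} {k l : ℕ} {p w x x' y z : Pt} {P : Finset Pt}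

/-- The points of `P` in the open wedge swept by the ray from `x` through `p` when it is rotated
in the direction `e` until it passes through `z`. -/
def sector (P : Finset Pt) (e : ℤˣ) (x p z : Pt) : Finset Pt :=
  {w ∈ P | Turn e x p w ∧ Turn e x w z}

/-- Rotating the ray from `x` through `p` in the direction `e`, one meets at most `k` points of
`P` before reaching `z`. For fixed `x` and `z` few points `p` have this property, and so it
governs which extreme points a hole is charged to. -/
def Near (P : Finset Pt) (k : ℕ) (e : ℤˣ) (x p z : Pt) : Prop :=
  Turn e x p z ∧ (sector P e x p z).card ≤ k

lemma mem_sector : w ∈ sector P e x p z ↔ w ∈ P ∧ Turn e x p w ∧ Turn e x w z := by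
  simp [sector]

lemma Near.mono (hkl : k ≤ l) (h : Near P k e x p z) : Near P l e x p z :=
  ⟨h.1, h.2.trans hkl⟩

lemma Near.turn_of_ne (hP : GenPos P) (h : Near P 0 e x p y) (hx : x ∈ P) (hy : y ∈ P)
    (hw : w ∈ P) (hpw : Turn e x p w) (hwy : w ≠ y) : Turn e x y w := by
  refine (hP.turn_or_turn e hx hw hy hpw.ne₁₃ h.1.ne₁₃ hwy).resolve_left fun hturn ↦ ?_
  have hempty := Finset.card_eq_zero.1 (Nat.le_zero.1 h.2)
  exact Finset.notMem_empty w (hempty ▸ mem_sector.2 ⟨hw, hpw, hturn⟩)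

lemma exists_near_zero (hP : GenPos P) (hx : x ∈ P) (hw : w ∈ P) (hpw : Turn e x p w) :
    ∃ y ∈ P, Near P 0 e x p y := by
  obtain ⟨y, hy, hfirst⟩ := hP.exists_first (S := {v ∈ P | Turn e x p v}) hx
    (Finset.coe_subset.2 (Finset.filter_subset _ _)) (fun v hv ↦ (Finset.mem_filter.1 hv).2) e
    ⟨w, Finset.mem_filter.2 ⟨hw, hpw⟩⟩
  obtain ⟨hyP, hpy⟩ := Finset.mem_filter.1 hy
  refine ⟨y, hyP, hpy, (Finset.card_eq_zero.2 (Finset.eq_empty_of_forall_notMem ?_)).le⟩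
  intro v hv
  obtain ⟨hvP, hpv, hvy⟩ := mem_sector.1 hv
  exact (hfirst v (Finset.mem_filter.2 ⟨hvP, hpv⟩) hvy.ne₂₃).not_swap hvy

lemma card_near_le (hP : GenPos P) (hx : x ∈ P) : {p ∈ P | Near P k e x p z}.card ≤ k + 1 := by
  set T : Finset Pt := {p ∈ P | Near P k e x p z}
  rcases T.eq_empty_or_nonempty with hE | hne
  · simp [hE]
  have hTz (q) (hq : q ∈ T) : Turn e x q z := (Finset.mem_filter.1 hq).2.1
  obtain ⟨a, ha, hfirst⟩ := hP.exists_first hx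
    (Finset.coe_subset.2 (Finset.filter_subset _ _))
    (fun q hq ↦ turn_neg.2 (hTz q hq)) e hne
  have hsub : T.erase a ⊆ sector P e x a z := fun q hq ↦ by
    obtain ⟨hqa, hqT⟩ := Finset.mem_erase.1 hq
    exact mem_sector.2 ⟨(Finset.mem_filter.1 hqT).1, hfirst q hqT hqa, hTz q hqT⟩
  have hle : (T.erase a).card ≤ k :=
    (Finset.card_le_card hsub).trans (Finset.mem_filter.1 ha).2.2
  exact (Finset.card_erase_add_one ha).ge.trans (Nat.succ_le_succ hle)

lemma exists_turn_of_not_near (hP : GenPos P) (hp : p ∈ P) (hx : x ∈ P)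
    (hxx' : Turn e p x x') (hfar : ¬ Near P k e x' p x)
    (hcard : (hullPts P {p, x, x'}).card ≤ k) :
    ∃ w ∈ P, Turn e x p w ∧ Turn e x x' w := by
  have hmany : ¬ sector P e x' p x ⊆ hullPts P {p, x, x'} := fun hsub ↦
    hfar ⟨turn_rotate.1 hxx', (Finset.card_le_card hsub).trans hcard⟩
  obtain ⟨w, hw, hwout⟩ := Finset.not_subset.1 hmany
  obtain ⟨hwP, hpw, hwx⟩ := mem_sector.1 hw
  have hxw : Turn e x x' w := turn_rotate.1 hwx
  refine ⟨w, hwP, ?_, hxw⟩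
  refine (hP.turn_or_turn e hx hp hwP hxx'.ne₁₂.symm hxw.ne₁₃ hpw.ne₂₃).resolve_right
    fun hwp ↦ hwout (mem_hullPts.2 ⟨hwP, ?_⟩)
  exact mem_convexHull_triple hxx' (turn_rotate.1 hwp).le hxw.le hpw.le

lemma Near.turn_of_exists_turn (hP : GenPos P) (hx : x ∈ P) (hy : y ∈ P) (h : Near P 0 e x p y)
    (hxx' : Turn e p x x') (hw : ∃ w ∈ P, Turn e x p w ∧ Turn e x x' w) : Turn e x x' y := by
  obtain ⟨w, hwP, hpw, hxw⟩ := hw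
  rcases eq_or_ne w y with rfl | hwy
  · exact hxw
  · exact Turn.of_between (turn_rotate.2 hxx') hxw h.1 (h.turn_of_ne hP hx hy hwP hpw hwy) hpw

end Near

section Ears

variable {e : ℤˣ} {k : ℕ} {a b p s x y y' z : Pt} {P K : Finset Pt} {S : Set Pt}

/-- The point `y` forms an ear over the first point `a` of `K`: in the rotation `e` about `p` the
point `a` comes first in `K`, the triangle `p a y` precedes `K`, no point of `P` is met between
`p` and `y` when rotating about `a`, and `K` lies on the same side of the line `a y` as `p`. -/
structure IsEar (P : Finset Pt) (p : Pt) (K : Finset Pt) (e : ℤˣ) (a y : Pt) : Prop where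
  mem : a ∈ K
  first : ∀ k ∈ K, k ≠ a → Turn e p a k
  tip_mem : y ∈ P
  near : Near P 0 e a p y
  beyond : ∀ k ∈ K, k ≠ a → Turn e a k y

/-- `K` has an ear `y` over its first point `a` and an ear `y'` over its last point `b`, with
respect to the rotation about `p` in the direction `e`. -/
structure IsTwoEared (P : Finset Pt) (p : Pt) (K : Finset Pt) (e : ℤˣ) (a b y y' : Pt) :
    Prop where
  subset : K ⊆ P
  ne : a ≠ b
  ear : IsEar P p K e a y
  ear' : IsEar P p K (-e) b y'

/-- The points spanning the region formed by `p`, by `K`, and by the two ears `y`, `y'`. -/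
def earVertices (p : Pt) (K : Finset Pt) (y y' : Pt) : Set Pt := insert y (insert y' (insert p K))

lemma earVertices_comm : earVertices p K y' y = earVertices p K y y' := Set.insert_comm _ _ _

lemma exists_isEar (hP : GenPos P) (hp : p ∈ P) (hK : K ⊆ P) (ha : a ∈ K) (hKa : K.Nontrivial)
    (hfirst : ∀ v ∈ K, v ≠ a → Turn e p a v) (hfar : ∀ v ∈ K, ¬ Near P k e v p a)
    (hcard : (hullPts P (insert p K)).card ≤ k) : ∃ y, IsEar P p K e a y := by
  have hpoint (v) (hv : v ∈ K) (hva : v ≠ a) : ∃ w ∈ P, Turn e a p w ∧ Turn e a v w := by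
    refine exists_turn_of_not_near hP hp (hK ha) (hfirst v hv hva) (hfar v hv)
      ((Finset.card_le_card (hullPts_mono P ?_)).trans hcard)
    rintro _ (rfl | rfl | rfl) <;> exact subset_convexHull ℝ _ (by simp [ha, hv])
  obtain ⟨b, hb, hba⟩ := hKa.exists_ne a
  obtain ⟨w, hw, hpw, -⟩ := hpoint b hb hba
  obtain ⟨y, hy, hnear⟩ := exists_near_zero hP (hK ha) hw hpw
  exact ⟨y, ha, hfirst, hy, hnear, fun v hv hva ↦
    hnear.turn_of_exists_turn hP (hK ha) hy (hfirst v hv hva) (hpoint v hv hva)⟩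

lemma IsEar.sdet_nonneg (h : IsEar P p K e a y) (hz : z ∈ convexHull ℝ (insert p (K : Set Pt))) :
    0 ≤ sdet e p a z := by
  refine sdet_nonneg_of_mem_convexHull (fun v hv ↦ ?_) hz
  rcases hv with rfl | hv
  · simp
  rcases eq_or_ne v a with rfl | hva
  · simp
  · exact (h.first v hv hva).le

namespace IsTwoEared

lemma symm (h : IsTwoEared P p K e a b y y') : IsTwoEared P p K (-e) b a y' y :=
  ⟨h.subset, h.ne.symm, h.ear', by simpa using h.ear⟩

lemma earVertices_subset (h : IsTwoEared P p K e a b y y') (hp : p ∈ P) :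
    earVertices p K y y' ⊆ P := by
  rintro z (rfl | rfl | rfl | hz)
  exacts [h.ear.tip_mem, h.ear'.tip_mem, hp, h.subset hz]

lemma mem_hullPts_of_mem_earVertices (h : IsTwoEared P p K e a b y y') (hp : p ∈ P)
    (hz : z ∈ earVertices p K y y') : z ∈ hullPts P (earVertices p K y y') :=
  mem_hullPts_self (h.earVertices_subset hp) hz

lemma turn_tip (h : IsTwoEared P p K e a b y y') : Turn e p y a :=
  turn_rotate.2 h.ear.near.1

lemma turn_bases (h : IsTwoEared P p K e a b y y') : Turn e p a b :=
  h.ear.first b h.ear'.mem h.ne.symm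

lemma turn_tip' (h : IsTwoEared P p K e a b y y') : Turn e p b y' :=
  turn_neg.1 h.symm.turn_tip

lemma turn_bases_tip' (h : IsTwoEared P p K e a b y y') (hp : p ∈ extremePts (P : Set Pt)) :
    Turn e p a y' :=
  Turn.trans_of_mem_extremePts P.finite_toSet hp (h.subset h.ear.mem) (h.subset h.ear'.mem)
    h.ear'.tip_mem h.turn_bases h.turn_tip'

lemma turn_of_mem_earVertices (h : IsTwoEared P p K e a b y y') (hp : p ∈ extremePts (P : Set Pt))
    (hz : z ∈ earVertices p K y y') (hza : z ≠ a) (hzy : z ≠ y) : Turn e y a z := by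
  rcases hz with rfl | rfl | rfl | hz
  · exact absurd rfl hzy
  · have hbaz : Turn e a b z :=
      turn_rotate.1 (turn_neg.1 (h.ear'.beyond a h.ear.mem h.ne))
    exact turn_rotate.1 <| Turn.trans hbaz (turn_rotate.2 h.turn_bases)
      (h.ear.beyond b h.ear'.mem h.ne.symm) (turn_rotate.2 (h.turn_bases_tip' hp))
      h.ear.near.1
  · exact turn_rotate.2 h.turn_tip
  · exact turn_rotate.1 (h.ear.beyond z hz hza)

lemma sdet_nonneg_of_mem_convexHull (h : IsTwoEared P p K e a b y y')
    (hp : p ∈ extremePts (P : Set Pt)) (hz : z ∈ convexHull ℝ (earVertices p K y y')) :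
    0 ≤ sdet e y a z := by
  refine _root_.sdet_nonneg_of_mem_convexHull (fun v hv ↦ ?_) hz
  by_cases hva : v = a
  · simp [hva]
  by_cases hvy : v = y
  · simp [hvy]
  exact (h.turn_of_mem_earVertices hp hv hva hvy).le

lemma turn_of_mem_hullPts (hP : GenPos P) (h : IsTwoEared P p K e a b y y')
    (hp : p ∈ extremePts (P : Set Pt)) (hz : z ∈ hullPts P (earVertices p K y y')) (hza : z ≠ a)
    (hzy : z ≠ y) : Turn e y a z :=
  hP.turn_of_sdet_nonneg h.ear.tip_mem (h.subset h.ear.mem) (mem_hullPts.1 hz).1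
    h.ear.near.1.ne₁₃.symm hzy.symm hza.symm
    (h.sdet_nonneg_of_mem_convexHull hp (mem_hullPts.1 hz).2)

lemma eq_tip_of_turn (hP : GenPos P) (h : IsTwoEared P p K e a b y y')
    (hp : p ∈ extremePts (P : Set Pt)) (hz : z ∈ hullPts P (earVertices p K y y'))
    (hza : Turn e p z a) : z = y := by
  by_contra hzy
  have hyaz := h.turn_of_mem_hullPts hP hp hz hza.ne₂₃ hzy
  have hayz := h.ear.near.turn_of_ne hP (h.subset h.ear.mem) h.ear.tip_mem (mem_hullPts.1 hz).1
    (turn_rotate.1 hza) hzy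
  exact hayz.not_swap (turn_rotate.2 hyaz)

lemma base_mem_extremePts (hP : GenPos P) (h : IsTwoEared P p K e a b y y')
    (hp : p ∈ extremePts (P : Set Pt)) :
    a ∈ extremePts (hullPts P (earVertices p K y y') : Set Pt) := by
  refine mem_extremePts_of_turn (e := -e)
    (h.mem_hullPts_of_mem_earVertices hp.1 (by simp [earVertices, h.ear.mem]))
    h.ear.near.1.ne₁₃ fun z hz hza hzy ↦ turn_neg.2 ?_
  exact turn_rotate.2 (h.turn_of_mem_hullPts hP hp hz hza hzy)

lemma tip_mem_extremePts (hP : GenPos P) (h : IsTwoEared P p K e a b y y')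
    (hp : p ∈ extremePts (P : Set Pt)) :
    y ∈ extremePts (hullPts P (earVertices p K y y') : Set Pt) :=
  mem_extremePts_of_turn (h.mem_hullPts_of_mem_earVertices hp.1 (by simp [earVertices]))
    h.ear.near.1.ne₁₃.symm fun _ hz hzy hza ↦ h.turn_of_mem_hullPts hP hp hz hza hzy

lemma mem_convexHull_of_mem_insert_tip (h : IsTwoEared P p K e a b y y')
    (hp : p ∈ extremePts (P : Set Pt)) (hpS : p ∈ S) (haS : a ∈ S)
    (hS : S ⊆ earVertices p K y y') (hx : x ∈ convexHull ℝ (insert y S))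
    (hax : 0 ≤ sdet e p a x) : x ∈ convexHull ℝ S := by
  -- `x` is on a segment from the tip to some `s` in the hull of `S`, in the triangle `p a s`.
  rw [convexHull_insert ⟨p, hpS⟩, mem_convexJoin] at hx
  obtain ⟨t, ht, s, hs, α, β, hα, hβ, hαβ, rfl⟩ := hx
  obtain rfl : t = y := ht
  have hmono : convexHull ℝ S ⊆ convexHull ℝ (earVertices p K t y') := convexHull_mono hS
  obtain ⟨u, hu⟩ := exists_turn_of_mem_extremePts P.finite_toSet hp
  have hus : 0 ≤ sdet 1 p u s := by
    refine _root_.sdet_nonneg_of_mem_convexHull (fun v hv ↦ ?_) (hmono hs)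
    rcases eq_or_ne v p with rfl | hvp
    · simp
    · exact (hu v (h.earVertices_subset hp.1 hv) hvp).le
  have hua : 0 < sdet 1 p u a := hu a (h.subset h.ear.mem) h.turn_bases.ne₁₂.symm
  have hut : 0 < sdet 1 p u t := hu t h.ear.tip_mem h.turn_tip.ne₁₂.symm
  have hta : 0 < sdet e p t a := h.turn_tip
  rcases hα.eq_or_lt with rfl | hα
  · obtain rfl : β = 1 := by simpa using hαβ
    simpa using hs
  have hpas : 0 < sdet e p a s := by
    rw [sdet_affine_combination hαβ, sdet_swap e p t a] at hax
    exact pos_of_mul_pos_right (by linarith [mul_pos hα hta]) hβ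
  have hpts : 0 ≤ sdet e p t s := by
    refine nonneg_of_mul_nonneg_right (?_ : 0 ≤ sdet 1 p u a * _) hua
    rw [sdet_mul_sdet]
    positivity
  refine convexHull_min ?_ (convex_convexHull ℝ S) (mem_convexHull_triple hpas hax ?_ ?_)
  · rintro v (rfl | rfl | rfl)
    exacts [subset_convexHull ℝ S hpS, subset_convexHull ℝ S haS, hs]
  · rw [sdet_affine_combination hαβ, sdet_self_right, mul_zero, add_zero, sdet_rotate]
    exact mul_nonneg hα.le (h.sdet_nonneg_of_mem_convexHull hp (hmono hs))
  · rw [sdet_affine_combination hαβ, sdet_self_outer, mul_zero, add_zero, sdet_rotate,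
      sdet_rotate]
    exact mul_nonneg hα.le hpts

lemma hullPts_earVertices_subset (hP : GenPos P) (h : IsTwoEared P p K e a b y y')
    (hp : p ∈ extremePts (P : Set Pt)) :
    hullPts P (earVertices p K y y') ⊆ insert y (insert y' (hullPts P (insert p K))) := by
  intro x hx
  simp only [Finset.mem_insert]
  refine or_iff_not_imp_left.2 fun hxy ↦ or_iff_not_imp_left.2 fun hxy' ↦
    mem_hullPts.2 ⟨(mem_hullPts.1 hx).1, ?_⟩
  have hax : ¬ Turn e p x a := fun hxa ↦ hxy (h.eq_tip_of_turn hP hp hx hxa)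
  have hbx : ¬ Turn (-e) p x b := fun hxb ↦
    hxy' (h.symm.eq_tip_of_turn hP hp (by rwa [earVertices_comm]) hxb)
  have hx' := h.mem_convexHull_of_mem_insert_tip hp (by simp) (by simp [h.ear.mem])
    (Set.subset_insert _ _) (mem_hullPts.1 hx).2 (not_turn.1 hax)
  exact h.symm.mem_convexHull_of_mem_insert_tip hp (by simp) (by simp [h.ear'.mem])
    ((Set.subset_insert _ _).trans (Set.subset_insert _ _)) hx' (not_turn.1 hbx)

lemma base'_mem_extremePts (hP : GenPos P) (h : IsTwoEared P p K e a b y y')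
    (hp : p ∈ extremePts (P : Set Pt)) :
    b ∈ extremePts (hullPts P (earVertices p K y y') : Set Pt) :=
  earVertices_comm (y := y) ▸ h.symm.base_mem_extremePts hP hp

lemma tip'_mem_extremePts (hP : GenPos P) (h : IsTwoEared P p K e a b y y')
    (hp : p ∈ extremePts (P : Set Pt)) :
    y' ∈ extremePts (hullPts P (earVertices p K y y') : Set Pt) :=
  earVertices_comm (y := y) ▸ h.symm.tip_mem_extremePts hP hp

lemma turn_tips (h : IsTwoEared P p K e a b y y') (hp : p ∈ extremePts (P : Set Pt)) :
    Turn e p y y' :=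
  Turn.trans_of_mem_extremePts P.finite_toSet hp h.ear.tip_mem (h.subset h.ear.mem)
    h.ear'.tip_mem h.turn_tip (h.turn_bases_tip' hp)

lemma mem_holes5 (hP : GenPos P) (h : IsTwoEared P p {a, b} e a b y y')
    (hp : p ∈ extremePts (P : Set Pt)) (hempty : hullPts P {p, a, b} ⊆ {p, a, b}) :
    ({y, y', p, a, b} : Finset Pt) ∈ Holes5 P := by
  have hV : (({y, y', p, a, b} : Finset Pt) : Set Pt) = earVertices p {a, b} y y' := by
    simp [earVertices]
  have hyb : Turn e p y b := turn_neg.1 (h.symm.turn_bases_tip' hp)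
  have hsub := h.earVertices_subset hp.1
  refine mem_holes5_of_hullPts_subset ?_ (by exact_mod_cast hV.trans_subset hsub) ?_ ?_
  · simp [Finset.card_insert_of_notMem, h.ne, h.turn_tip.ne₁₂.symm, h.turn_tip.ne₂₃, hyb.ne₂₃,
      (h.turn_tips hp).ne₂₃, h.turn_tip'.ne₁₃.symm, h.turn_tip'.ne₂₃.symm,
      (h.turn_bases_tip' hp).ne₂₃.symm, h.turn_bases.ne₁₂, h.turn_bases.ne₁₃]
  · intro v hv
    rw [hV] at hv ⊢
    suffices hext : v ∈ extremePts (hullPts P (earVertices p {a, b} y y') : Set Pt) from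
      (mem_extremePts_mono (fun _ ↦ h.mem_hullPts_of_mem_earVertices hp.1) hv hext).2
    simp only [earVertices, Finset.coe_insert, Finset.coe_singleton, Set.mem_insert_iff,
      Set.mem_singleton_iff] at hv
    rcases hv with rfl | rfl | rfl | rfl | rfl
    · exact h.tip_mem_extremePts hP hp
    · exact h.tip'_mem_extremePts hP hp
    · exact mem_extremePts_mono (hullPts_subset _ _)
        (h.mem_hullPts_of_mem_earVertices hp.1 (by simp [earVertices])) hp
    · exact h.base_mem_extremePts hP hp
    · exact h.base'_mem_extremePts hP hp
  · rw [hV]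
    refine (h.hullPts_earVertices_subset hP hp).trans ?_
    exact Finset.insert_subset_insert _ (Finset.insert_subset_insert _ (by simpa using hempty))

end IsTwoEared

end Ears

section Windows

variable {e : ℤˣ} {p s t x z : Pt} {C H P W : Finset Pt}

/-- A 5-hole `H` is charged to an extreme point `p` of `P` if it contains `p`, or if it has
vertices `x` and `z` such that `p` is `Near` the ray from `x` through `z`. The threshold `11` is
the number of points of a window of ten points together with `p`. -/
def Charges (P : Finset Pt) (p : Pt) (H : Finset Pt) : Prop :=
  p ∈ H ∨ ∃ e, ∃ x ∈ H, ∃ z ∈ H, Near P 11 e x p z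

/-- In the rotation `e` about `p`, the point `x` comes before all points of `W`. -/
def Precedes (e : ℤˣ) (p : Pt) (W : Finset Pt) (x : Pt) : Prop := ∀ w ∈ W, Turn e p x w

/-- `W` is a set of consecutive points of `P` in the rotational order about `p`. -/
structure IsWindow (P : Finset Pt) (p : Pt) (W : Finset Pt) : Prop where
  subset : W ⊆ P
  notMem : p ∉ W
  nonempty : W.Nonempty
  mem_or_precedes : ∀ x ∈ P, x ≠ p → x ∈ W ∨ ∃ e, Precedes e p W x

/-- On either side of the window `W`, at most one point of `C` lies outside `W`. -/
def AlmostCovers (p : Pt) (W C : Finset Pt) : Prop := ∀ e, {x ∈ C | Precedes e p W x}.card ≤ 1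

lemma mem_hullPts_insert_of_mem (hp : p ∈ P) (hH : H ⊆ P) (hx : x ∈ H) :
    x ∈ hullPts P (insert p H) :=
  mem_hullPts_self (Set.insert_subset hp (by exact_mod_cast hH)) (Set.mem_insert_of_mem p hx)

lemma hullPts_insert_mono (P : Finset Pt) (p : Pt) {K : Finset Pt} (hKH : K ⊆ H) :
    hullPts P (insert p K) ⊆ hullPts P (insert p H) :=
  hullPts_mono P <| (Set.insert_subset_insert (by exact_mod_cast hKH)).trans
    (subset_convexHull ℝ _)

lemma Precedes.of_turn (hp : p ∈ extremePts (P : Set Pt)) (hWP : W ⊆ P) (hx : x ∈ P) (hz : z ∈ P)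
    (hzx : Turn e p z x) (h : Precedes e p W x) : Precedes e p W z := fun w hw ↦
  Turn.trans_of_mem_extremePts P.finite_toSet hp hz hx (hWP hw) hzx (h w hw)

lemma Precedes.ne (hW : W.Nonempty) (h : Precedes e p W x) : x ≠ p :=
  (h _ hW.choose_spec).ne₁₂.symm

lemma IsWindow.card_le_of_disjoint (hW : IsWindow P p W) (hHP : H ⊆ P) (hHW : Disjoint H W) :
    H.card ≤ {x ∈ H | Precedes 1 p W x}.card + {x ∈ H | Precedes (-1) p W x}.card + 1 := by
  have hsub : H ⊆ insert p ({x ∈ H | Precedes 1 p W x} ∪ {x ∈ H | Precedes (-1) p W x}) := by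
    intro x hx
    rcases eq_or_ne x p with rfl | hxp
    · simp
    obtain ⟨e, he⟩ := (hW.mem_or_precedes x (hHP hx) hxp).resolve_left
      (Finset.disjoint_left.1 hHW hx)
    rcases Int.units_eq_one_or e with rfl | rfl <;> simp [hx, he]
  exact (Finset.card_le_card hsub).trans <| (Finset.card_insert_le _ _).trans <|
    Nat.succ_le_succ (Finset.card_union_le _ _)

lemma IsWindow.hullPts_insert_subset (hW : IsWindow P p W) :
    hullPts P (insert p W) ⊆ insert p W := by
  intro z hz
  obtain ⟨hzP, hzhull⟩ := mem_hullPts.1 hz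
  by_contra hzW
  rw [Finset.mem_insert, not_or] at hzW
  obtain ⟨e, he⟩ := (hW.mem_or_precedes z hzP hzW.1).resolve_left hzW.2
  rcases eq_or_turn_of_mem_convexHull (sdet_self_outer e p z)
    (fun v hv ↦ hv.imp_right (he v)) hzhull with hzp | hturn
  exacts [hzW.1 hzp, hturn.ne₂₃ rfl]

lemma IsWindow.isIsland (hp : p ∈ extremePts (P : Set Pt)) (hW : IsWindow P p W) :
    IsIsland (W : Set Pt) P := by
  refine ⟨by exact_mod_cast hW.subset, fun x hx hxW ↦ ?_⟩
  have hxpW : x ∈ insert p W := hW.hullPts_insert_subset <|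
    mem_hullPts.2 ⟨hx, convexHull_mono (Set.subset_insert _ _) hxW⟩
  refine (Finset.mem_insert.1 hxpW).resolve_left ?_
  rintro rfl
  exact hp.2 (convexHull_mono (Set.subset_sdiff_singleton (by exact_mod_cast hW.subset)
    (by exact_mod_cast hW.notMem)) hxW)

namespace AlmostCovers

lemma mono {D : Finset Pt} (h : AlmostCovers p W C) (hDC : D ⊆ C) : AlmostCovers p W D :=
  fun e ↦ (Finset.card_le_card (Finset.filter_subset_filter _ hDC)).trans (h e)

lemma not_precedes (h : AlmostCovers p W C) (hp : p ∈ extremePts (P : Set Pt)) (hWP : W ⊆ P)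
    (hCP : C ⊆ P) (hs : s ∈ C) (hx : x ∈ C) (hsx : Turn e p s x) : ¬ Precedes e p W x := by
  intro hpre
  have hpre' := hpre.of_turn hp hWP (hCP hx) (hCP hs) hsx
  exact hsx.ne₂₃ (Finset.card_le_one.1 (h e) s (Finset.mem_filter.2 ⟨hs, hpre'⟩) x
    (Finset.mem_filter.2 ⟨hx, hpre⟩))

lemma mem_of_between (h : AlmostCovers p W C) (hp : p ∈ extremePts (P : Set Pt))
    (hW : IsWindow P p W) (hCP : C ⊆ P) (hs : s ∈ C) (hx : x ∈ C) (ht : t ∈ C)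
    (hsx : Turn 1 p s x) (hxt : Turn 1 p x t) : x ∈ W := by
  refine (hW.mem_or_precedes x (hCP hx) hsx.ne₁₃.symm).resolve_right ?_
  rintro ⟨e, he⟩
  rcases Int.units_eq_one_or e with rfl | rfl
  exacts [h.not_precedes hp hW.subset hCP hs hx hsx he,
    h.not_precedes hp hW.subset hCP ht hx (turn_neg.2 hxt) he]

end AlmostCovers

/-- A 5-hole from which the descent towards a charged hole meeting the window `W` can start. -/
structure IsSeed (P : Finset Pt) (p : Pt) (W H : Finset Pt) : Prop where
  hole : H ∈ Holes5 (P : Set Pt)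
  card_le : (hullPts P (insert p H)).card ≤ 11
  covers : AlmostCovers p W (hullPts P (insert p H))

namespace IsSeed

lemma subset (h : IsSeed P p W H) : H ⊆ P := by exact_mod_cast h.hole.2.1

lemma mem_hullPts (h : IsSeed P p W H) (hp : p ∈ P) (hx : x ∈ H) : x ∈ hullPts P (insert p H) :=
  mem_hullPts_insert_of_mem hp h.subset hx

lemma not_disjoint (h : IsSeed P p W H) (hp : p ∈ P) (hW : IsWindow P p W) : ¬ Disjoint H W := by
  intro hHW
  have hcov := h.covers.mono fun x hx ↦ h.mem_hullPts hp hx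
  have := hW.card_le_of_disjoint h.subset hHW
  have := hcov 1
  have := hcov (-1)
  have := h.hole.1
  omega

lemma of_window (hp : p ∈ extremePts (P : Set Pt)) (hW : IsWindow P p W) (hcard : W.card ≤ 10)
    (hH : H ∈ Holes5 (W : Set Pt)) : IsSeed P p W H := by
  have hHW : H ⊆ W := by exact_mod_cast hH.2.1
  have hsub : hullPts P (insert p H) ⊆ insert p W :=
    (hullPts_insert_mono P p hHW).trans hW.hullPts_insert_subset
  refine ⟨(hW.isIsland hp).holes5_subset hH, ?_, fun e ↦ ?_⟩
  · exact (Finset.card_le_card hsub).trans <| (Finset.card_insert_le _ _).trans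
      (Nat.succ_le_succ hcard)
  · refine (Finset.card_eq_zero.2 (Finset.filter_eq_empty_iff.2 fun x hx hpre ↦ ?_)).le.trans
      zero_le_one
    rcases Finset.mem_insert.1 (hsub hx) with rfl | hxW
    exacts [hpre.ne hW.nonempty rfl, (hpre x hxW).ne₂₃ rfl]

end IsSeed

end Windows

section Descent

variable {e : ℤˣ} {p a b c v x x' y y' z : Pt} {H K P W : Finset Pt}

lemma exists_isTwoEared (hP : GenPos P) (hp : p ∈ P) (hHP : H ⊆ P) (hfar : ¬ Charges P p H)
    (hcard : (hullPts P (insert p H)).card ≤ 11) (hKH : K ⊆ H) (ha : a ∈ K) (hb : b ∈ K)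
    (hab : a ≠ b) (hfirst : ∀ v ∈ K, v ≠ a → Turn e p a v) (hlast : ∀ v ∈ K, v ≠ b → Turn e p v b) :
    ∃ y y', IsTwoEared P p K e a b y y' := by
  have hKP := hKH.trans hHP
  have hnear (e) (t) (ht : t ∈ K) (v) (hv : v ∈ K) : ¬ Near P 11 e v p t := fun h ↦
    hfar (Or.inr ⟨e, v, hKH hv, t, hKH ht, h⟩)
  have hcardK : (hullPts P (insert p K)).card ≤ 11 :=
    (Finset.card_le_card (hullPts_insert_mono P p hKH)).trans hcard
  obtain ⟨y, hy⟩ := exists_isEar hP hp hKP ha ⟨a, ha, b, hb, hab⟩ hfirst (hnear e a ha) hcardK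
  obtain ⟨y', hy'⟩ := exists_isEar hP hp hKP hb ⟨a, ha, b, hb, hab⟩
    (fun v hv hvb ↦ turn_neg.2 (hlast v hv hvb)) (hnear (-e) b hb) hcardK
  exact ⟨y, y', hKP, hab, hy, hy'⟩

lemma notMem_hullPts_insert {Q : Finset Pt} (hv : v ∈ extremePts (Q : Set Pt)) (hp : p ∈ Q)
    (hvp : v ≠ p) (hH : H ⊆ Q) (hvH : v ∉ H) : v ∉ hullPts P (insert p H) := by
  have hsub : insert p (H : Set Pt) ⊆ (Q : Set Pt) \ {v} :=
    Set.insert_subset ⟨hp, hvp.symm⟩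
      (Set.subset_sdiff_singleton (by exact_mod_cast hH) (by exact_mod_cast hvH))
  exact fun h ↦ hv.2 (convexHull_mono hsub (mem_hullPts.1 h).2)

lemma IsTwoEared.exists_notMem_hullPts_insert (hP : GenPos P) (h : IsTwoEared P p K e a b y y')
    (hp : p ∈ extremePts (P : Set Pt)) (hH : H ⊆ hullPts P (earVertices p K y y'))
    (hfar : ¬ Charges P p H) :
    ∃ v ∈ hullPts P (earVertices p K y y'), (v = y ∨ v = a) ∧ v ∉ hullPts P (insert p H) := by
  have hpQ := h.mem_hullPts_of_mem_earVertices hp.1 (z := p) (by simp [earVertices])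
  have htip := h.tip_mem_extremePts hP hp
  have hbase := h.base_mem_extremePts hP hp
  by_cases hy : y ∈ H
  · have ha : a ∉ H := fun ha ↦
      hfar (Or.inr ⟨e, a, ha, y, hy, h.ear.near.mono (Nat.zero_le 11)⟩)
    exact ⟨a, hbase.1, Or.inr rfl, notMem_hullPts_insert hbase hpQ h.turn_tip.ne₁₃.symm hH ha⟩
  · exact ⟨y, htip.1, Or.inl rfl, notMem_hullPts_insert htip hpQ h.turn_tip.ne₁₂.symm hH hy⟩

lemma IsTwoEared.eq_tip_or_eq_base_of_precedes (hP : GenPos P) (h : IsTwoEared P p K e a b y y')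
    (hp : p ∈ extremePts (P : Set Pt)) (hW : IsWindow P p W)
    (hcov : AlmostCovers p W (hullPts P (insert p K)))
    (hz : z ∈ hullPts P (earVertices p K y y')) (hpre : Precedes e p W z) : z = y ∨ z = a := by
  have hCP := hullPts_subset P (insert p (K : Set Pt))
  have haC := mem_hullPts_insert_of_mem hp.1 h.subset h.ear.mem
  have hbC := mem_hullPts_insert_of_mem hp.1 h.subset h.ear'.mem
  have hzQ := h.hullPts_earVertices_subset hP hp hz
  rw [Finset.mem_insert, Finset.mem_insert] at hzQ
  refine hzQ.imp_right fun hzC ↦ ?_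
  rcases hzC with rfl | hzC
  · exact absurd (hpre.of_turn hp hW.subset h.ear'.tip_mem (h.subset h.ear'.mem) h.turn_tip')
      (hcov.not_precedes hp hW.subset hCP haC hbC h.turn_bases)
  · by_contra hza
    have haz : Turn e p a z := hP.turn_of_sdet_nonneg hp.1 (h.subset h.ear.mem) (hCP hzC)
      h.turn_bases.ne₁₂ (hpre.ne hW.nonempty).symm (Ne.symm hza)
      (h.ear.sdet_nonneg (mem_hullPts.1 hzC).2)
    exact hcov.not_precedes hp hW.subset hCP haC hzC haz hpre

lemma IsTwoEared.card_hullPts_le (hP : GenPos P) (h : IsTwoEared P p K e a b y y')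
    (hp : p ∈ extremePts (P : Set Pt)) :
    (hullPts P (earVertices p K y y')).card ≤ (hullPts P (insert p K)).card + 2 :=
  (Finset.card_le_card (h.hullPts_earVertices_subset hP hp)).trans <|
    (Finset.card_insert_le _ _).trans (Nat.succ_le_succ (Finset.card_insert_le _ _))

lemma IsTwoEared.card_hullPts_insert_le (hP : GenPos P) (h : IsTwoEared P p K e a b y y')
    (hp : p ∈ extremePts (P : Set Pt)) (hH : H ⊆ hullPts P (earVertices p K y y'))
    (hfar : ¬ Charges P p H) :
    (hullPts P (insert p H)).card ≤ (hullPts P (insert p K)).card := by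
  set Q := hullPts P (earVertices p K y y')
  obtain ⟨v, hvQ, hv, hvH⟩ := h.exists_notMem_hullPts_insert hP hp hH hfar
  obtain ⟨v', hvQ', hv', hvH'⟩ := h.symm.exists_notMem_hullPts_insert hP hp
    (by rwa [earVertices_comm]) hfar
  rw [earVertices_comm] at hvQ'
  have hvv' : v ≠ v' := by
    rcases hv with rfl | rfl <;> rcases hv' with rfl | rfl
    exacts [(h.turn_tips hp).ne₂₃, (h.symm.turn_bases_tip' hp).ne₂₃.symm,
      (h.turn_bases_tip' hp).ne₂₃, h.ne]
  have hsub : insert v (insert v' (hullPts P (insert p H))) ⊆ Q :=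
    Finset.insert_subset hvQ <| Finset.insert_subset hvQ' <|
      hullPts_insert_subset (by simp [earVertices]) (by exact_mod_cast hH)
  have hle := (Finset.card_le_card hsub).trans (h.card_hullPts_le hP hp)
  rwa [Finset.card_insert_of_notMem (by simp [hvv', hvH]), Finset.card_insert_of_notMem hvH',
    Nat.add_le_add_iff_right (n := 2)] at hle

lemma add_two_le_card_of_turn (hp : p ∈ extremePts (P : Set Pt)) {Q : Finset Pt} (hQP : Q ⊆ P)
    (hpQ : p ∈ Q) {n : ℕ} {v : Fin (n + 1) → Pt} (hvQ : ∀ i, v i ∈ Q.erase p)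
    (hv : ∀ i : Fin n, Turn e p (v i.castSucc) (v i.succ)) : n + 2 ≤ Q.card := by
  let r : Q → Q → Prop := fun x y ↦ Turn e p x y
  have : IsTrans Q r := ⟨fun x y z ↦
    Turn.trans_of_mem_extremePts P.finite_toSet hp (hQP x.2) (hQP y.2) (hQP z.2)⟩
  have hlt := (Fin.liftFun_iff_succ r
    (f := fun i ↦ ⟨v i, Finset.mem_of_mem_erase (hvQ i)⟩)).2 hv
  have hinj : Function.Injective v := fun i j hij ↦ by
    by_contra hne
    rcases lt_or_gt_of_ne hne with h | h
    exacts [(hlt h).ne₂₃ hij, (hlt h).ne₂₃ hij.symm]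
  have hle := Finset.card_le_card_of_injOn (s := Finset.univ) v (fun i _ ↦ hvQ i) hinj.injOn
  rw [Finset.card_fin, Finset.card_erase_of_mem hpQ] at hle
  omega

lemma turn_of_mem_hullPts_triple (hP : GenPos P) (hp : p ∈ P) (hx : x ∈ P) (hx' : x' ∈ P)
    (hxx' : Turn e p x x') (hz : z ∈ hullPts P {p, x, x'}) (hzp : z ≠ p) (hzx : z ≠ x) :
    Turn e p x z := by
  refine hP.turn_of_sdet_nonneg hp hx (mem_hullPts.1 hz).1 hxx'.ne₁₂ hzp.symm hzx.symm
    (sdet_nonneg_of_mem_convexHull ?_ (mem_hullPts.1 hz).2)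
  rintro v (rfl | rfl | rfl)
  exacts [(sdet_self_outer e v x).ge, (sdet_self_right e p v).ge, hxx'.le]

namespace IsSeed

lemma exists_between (hP : GenPos P) (h : IsSeed P p W H) (hp : p ∈ extremePts (P : Set Pt))
    (hW : IsWindow P p W) (hfar : ¬ Charges P p H)
    (hno : ∀ H ∈ Holes5 (P : Set Pt), Charges P p H → Disjoint H W) (hx : x ∈ H) (hx' : x' ∈ H)
    (hc : c ∈ H) (hxx' : Turn 1 p x x') (hxc : Turn 1 p x' c) :
    ∃ g ∈ hullPts P {p, x, x'}, Turn 1 p x g ∧ Turn 1 p g x' := by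
  obtain ⟨y, y', hears⟩ := exists_isTwoEared (K := {x, x'}) (a := x) (b := x') hP hp.1 h.subset
    hfar h.card_le (by simp [Finset.insert_subset_iff, hx, hx']) (by simp) (by simp) hxx'.ne₂₃
    (by simpa using fun _ ↦ hxx') (by simpa using fun _ ↦ hxx')
  by_cases hempty : hullPts P {p, x, x'} ⊆ {p, x, x'}
  · have hhole := hears.mem_holes5 hP hp hempty
    have hmem {v} (hv : v ∈ H) := h.mem_hullPts hp.1 hv
    have hxW : x' ∈ W := h.covers.mem_of_between hp hW (hullPts_subset _ _) (hmem hx) (hmem hx')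
      (hmem hc) hxx' hxc
    exact absurd hxW (Finset.disjoint_left.1 (hno _ hhole (Or.inl (by simp))) (by simp))
  · obtain ⟨g, hg, hgout⟩ := Finset.not_subset.1 hempty
    simp only [Finset.mem_insert, Finset.mem_singleton, not_or] at hgout
    obtain ⟨hgp, hgx, hgx'⟩ := hgout
    refine ⟨g, hg, turn_of_mem_hullPts_triple hP hp.1 (h.subset hx) (h.subset hx') hxx' hg hgp hgx,
      turn_neg.1 (turn_of_mem_hullPts_triple hP hp.1 (h.subset hx') (h.subset hx)
        (turn_neg.2 hxx') ?_ hgp hgx')⟩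
    rwa [Set.pair_comm]

lemma exists_isTwoEared (hP : GenPos P) (h : IsSeed P p W H) (hp : p ∈ extremePts (P : Set Pt))
    (hfar : ¬ Charges P p H) (f : Fin 5 ≃ H) (hf : ∀ i j, i < j → Turn 1 p (f i) (f j)) :
    ∃ y y', IsTwoEared P p (H.erase (f 4)) 1 (f 0) (f 3) y y' := by
  have hne {i j : Fin 5} (hij : i ≠ j) : (f i : Pt) ≠ f j :=
    fun h ↦ hij (f.injective (Subtype.ext h))
  have hmem {i : Fin 5} (hi : i ≠ 4) : (f i : Pt) ∈ H.erase (f 4) :=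
    Finset.mem_erase.2 ⟨hne hi, (f i).2⟩
  have hindex (v) (hv : v ∈ H.erase (f 4)) : ∃ i : Fin 5, i ≠ 4 ∧ f i = v := by
    obtain ⟨hv4, hvH⟩ := Finset.mem_erase.1 hv
    refine ⟨f.symm ⟨v, hvH⟩, fun h4 ↦ hv4 ?_, by simp⟩
    rw [← h4, f.apply_symm_apply]
  refine _root_.exists_isTwoEared hP hp.1 h.subset hfar h.card_le (Finset.erase_subset _ _)
    (hmem (by decide)) (hmem (by decide)) (hne (by decide)) (fun v hv hv0 ↦ ?_) fun v hv hv3 ↦ ?_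
  · obtain ⟨i, -, rfl⟩ := hindex v hv
    exact hf 0 i (Fin.pos_of_ne_zero fun hi ↦ hv0 (hi ▸ rfl))
  · obtain ⟨i, hi4, rfl⟩ := hindex v hv
    exact hf i 3 (by have : i ≠ 3 := fun hi ↦ hv3 (hi ▸ rfl); omega)

lemma ten_le_card (hP : GenPos P) (h : IsSeed P p W H) (hp : p ∈ extremePts (P : Set Pt))
    (hW : IsWindow P p W) (hfar : ¬ Charges P p H)
    (hno : ∀ H ∈ Holes5 (P : Set Pt), Charges P p H → Disjoint H W) (f : Fin 5 ≃ H)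
    (hf : ∀ i j, i < j → Turn 1 p (f i) (f j))
    (hears : IsTwoEared P p (H.erase (f 4)) 1 (f 0) (f 3) y y') :
    10 ≤ (hullPts P (earVertices p (H.erase (f 4)) y y')).card := by
  set V := earVertices p (H.erase (f 4)) y y' with hV
  have hpV : p ∈ V := by simp [hV, earVertices]
  have hyV : y ∈ V := by simp [hV, earVertices]
  have hyV' : y' ∈ V := by simp [hV, earVertices]
  have hfV {i : Fin 5} (hi : i < 4) : (f i : Pt) ∈ V := by
    simp [hV, earVertices, (hf i 4 hi).ne₂₃]
  have hVQ {z} (hz : z ∈ V) : z ∈ hullPts P V := hears.mem_hullPts_of_mem_earVertices hp.1 hz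
  have hgap {i j : Fin 5} (hij : i < j) (hj : j < 4) :
      ∃ g ∈ hullPts P V, Turn 1 p (f i) g ∧ Turn 1 p g (f j) := by
    obtain ⟨g, hg, hig, hgj⟩ := h.exists_between hP hp hW hfar hno (f i).2 (f j).2 (f 4).2
      (hf i j hij) (hf j 4 hj)
    refine ⟨g, hullPts_mono P ?_ hg, hig, hgj⟩
    rintro _ (rfl | rfl | rfl)
    exacts [subset_convexHull ℝ V hpV, subset_convexHull ℝ V (hfV (hij.trans hj)),
      subset_convexHull ℝ V (hfV hj)]
  obtain ⟨g₁, hg₁, h0g, hg1⟩ := hgap (i := 0) (j := 1) (by decide) (by decide)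
  obtain ⟨g₂, hg₂, h1g, hg2⟩ := hgap (i := 1) (j := 2) (by decide) (by decide)
  obtain ⟨g₃, hg₃, h2g, hg3⟩ := hgap (i := 2) (j := 3) (by decide) (by decide)
  refine add_two_le_card_of_turn (e := 1) (n := 8)
    (v := ![y, f 0, g₁, f 1, g₂, f 2, g₃, f 3, y']) hp (hullPts_subset P V) (hVQ hpV) ?_ ?_
  · simp [Fin.forall_fin_succ, hg₁, hg₂, hg₃, hVQ, hfV, hyV, hyV', hears.turn_tip.ne₁₂.symm,
      h0g.ne₁₂.symm, h0g.ne₁₃.symm, h1g.ne₁₂.symm, h1g.ne₁₃.symm, h2g.ne₁₂.symm, h2g.ne₁₃.symm,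
      hg3.ne₁₃.symm, hears.turn_tip'.ne₁₃.symm]
  · simp [Fin.forall_fin_succ, h0g, h1g, h2g, hg1, hg2, hg3, hears.turn_tip, hears.turn_tip']

lemma filter_precedes_subset (hP : GenPos P) (h : IsSeed P p W H)
    (hp : p ∈ extremePts (P : Set Pt)) (hW : IsWindow P p W) (hc : c ∈ H) (hbc : Turn 1 p b c)
    (hears : IsTwoEared P p (H.erase c) 1 a b y y') {C : Finset Pt}
    (hC : C ⊆ hullPts P (earVertices p (H.erase c) y y')) :
    {z ∈ C | Precedes 1 p W z} ⊆ {y, a} ∧ {z ∈ C | Precedes (-1) p W z} ⊆ {y'} := by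
  have hcov := h.covers.mono (hullPts_insert_mono P p (Finset.erase_subset c H))
  constructor <;> intro z hz <;> obtain ⟨hzC, hpre⟩ := Finset.mem_filter.1 hz
  · simpa using hears.eq_tip_or_eq_base_of_precedes hP hp hW hcov (hC hzC) hpre
  · refine Finset.mem_singleton.2 <| (hears.symm.eq_tip_or_eq_base_of_precedes hP hp hW hcov
      (by rw [earVertices_comm]; exact hC hzC) hpre).resolve_right ?_
    rintro rfl
    exact h.covers.not_precedes hp hW.subset (hullPts_subset _ _) (h.mem_hullPts hp.1 hc)
      (h.mem_hullPts hp.1 (Finset.mem_of_mem_erase hears.ear'.mem)) (turn_neg.2 hbc) hpre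

lemma not_charges_of_isTwoEared (hP : GenPos P) (h : IsSeed P p W H)
    (hp : p ∈ extremePts (P : Set Pt)) (hW : IsWindow P p W)
    (hno : ∀ H ∈ Holes5 (P : Set Pt), Charges P p H → Disjoint H W) (hc : c ∈ H)
    (hbc : Turn 1 p b c) (hears : IsTwoEared P p (H.erase c) 1 a b y y') {H' : Finset Pt}
    (hH' : H' ∈ Holes5 (P : Set Pt))
    (hsub : H' ⊆ hullPts P (earVertices p (H.erase c) y y')) : ¬ Charges P p H' := by
  intro hcharges
  obtain ⟨hl, hr⟩ := h.filter_precedes_subset hP hp hW hc hbc hears hsub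
  have := hW.card_le_of_disjoint (hsub.trans (hullPts_subset _ _)) (hno H' hH' hcharges)
  have := (Finset.card_le_card hl).trans Finset.card_le_two
  have := (Finset.card_le_card hr).trans_eq (Finset.card_singleton y')
  have := hH'.1
  omega

lemma card_lt_of_isTwoEared (hP : GenPos P) (h : IsSeed P p W H)
    (hp : p ∈ extremePts (P : Set Pt)) (hc : c ∈ H) (hbc : Turn 1 p b c)
    (hears : IsTwoEared P p (H.erase c) 1 a b y y') {H' : Finset Pt}
    (hsub : H' ⊆ hullPts P (earVertices p (H.erase c) y y')) (hfar : ¬ Charges P p H') :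
    (hullPts P (insert p H')).card < (hullPts P (insert p H)).card := by
  refine (hears.card_hullPts_insert_le hP hp hsub hfar).trans_lt <| Finset.card_lt_card <|
    (Finset.ssubset_iff_of_subset (hullPts_insert_mono P p (Finset.erase_subset c H))).2
      ⟨c, h.mem_hullPts hp.1 hc, fun hcK ↦ ?_⟩
  exact not_turn.2 (hears.ear'.sdet_nonneg (_root_.mem_hullPts.1 hcK).2) (turn_neg.2 hbc)

lemma of_isTwoEared (hP : GenPos P) (h : IsSeed P p W H) (hp : p ∈ extremePts (P : Set Pt))
    (hW : IsWindow P p W) (hc : c ∈ H) (hbc : Turn 1 p b c)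
    (hears : IsTwoEared P p (H.erase c) 1 a b y y') {H' : Finset Pt}
    (hH' : H' ∈ Holes5 (P : Set Pt))
    (hsub : H' ⊆ hullPts P (earVertices p (H.erase c) y y')) (hfar : ¬ Charges P p H') :
    IsSeed P p W H' := by
  refine ⟨hH', (h.card_lt_of_isTwoEared hP hp hc hbc hears hsub hfar).le.trans h.card_le, ?_⟩
  obtain ⟨hl, hr⟩ := h.filter_precedes_subset hP hp hW hc hbc hears
    (hullPts_insert_subset (p := p) (by simp [earVertices]) (by exact_mod_cast hsub))
  obtain ⟨v, -, hv, hvH'⟩ := hears.exists_notMem_hullPts_insert hP hp hsub hfar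
  intro e
  rcases Int.units_eq_one_or e with rfl | rfl
  · have hle := Finset.card_le_card <| Finset.subset_erase.2
      ⟨hl, fun hvl ↦ hvH' (Finset.mem_filter.1 hvl).1⟩
    rw [Finset.card_erase_of_mem (by simpa using hv)] at hle
    exact hle.trans (Nat.sub_le_sub_right Finset.card_le_two 1)
  · exact (Finset.card_le_card hr).trans_eq (Finset.card_singleton y')

lemma exists_smaller
    (harborth : ∀ Q : Finset Pt, Q.card = 10 → GenPos Q → (Holes5 Q).Nonempty)
    (hP : GenPos P) (h : IsSeed P p W H) (hp : p ∈ extremePts (P : Set Pt)) (hW : IsWindow P p W)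
    (hno : ∀ H ∈ Holes5 (P : Set Pt), Charges P p H → Disjoint H W) :
    ∃ H', IsSeed P p W H' ∧
      (hullPts P (insert p H')).card < (hullPts P (insert p H)).card := by
  have hfar : ¬ Charges P p H := fun hch ↦ h.not_disjoint hp.1 hW (hno H h.hole hch)
  obtain ⟨u, hu⟩ := exists_turn_of_mem_extremePts P.finite_toSet hp
  have hpH (w) (hw : w ∈ H) : w ≠ p := fun hwp ↦ hfar (Or.inl (hwp ▸ hw))
  obtain ⟨f, hf⟩ := hP.exists_equiv_turn hp.1 h.hole.2.1
    (fun w hw ↦ hu w (h.subset hw) (hpH w hw)) 1 h.hole.1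
  obtain ⟨y, y', hears⟩ := h.exists_isTwoEared hP hp hfar f hf
  obtain ⟨H', hH'⟩ := holes5_nonempty_of_le_card harborth _
    (hP.mono (hullPts_subset P _)) (h.ten_le_card hP hp hW hfar hno f hf hears)
  have hsub : H' ⊆ hullPts P (earVertices p (H.erase (f 4)) y y') := by exact_mod_cast hH'.2.1
  have hhole := (isIsland_hullPts P _).holes5_subset hH'
  have hbc := hf 3 4 (by decide)
  have hfar' := h.not_charges_of_isTwoEared hP hp hW hno (f 4).2 hbc hears hhole hsub
  exact ⟨H', h.of_isTwoEared hP hp hW (f 4).2 hbc hears hhole hsub hfar',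
    h.card_lt_of_isTwoEared hP hp (f 4).2 hbc hears hsub hfar'⟩

lemma exists_charges
    (harborth : ∀ Q : Finset Pt, Q.card = 10 → GenPos Q → (Holes5 Q).Nonempty)
    (hP : GenPos P) (h : IsSeed P p W H) (hp : p ∈ extremePts (P : Set Pt))
    (hW : IsWindow P p W) : ∃ H ∈ Holes5 (P : Set Pt), Charges P p H ∧ ¬ Disjoint H W := by
  by_contra! hno
  induction hn : (hullPts P (insert p H)).card using Nat.strong_induction_on generalizing H with
  | h n ih =>
    obtain ⟨H', hH', hlt⟩ := h.exists_smaller harborth hP hp hW hno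
    exact ih _ (hn ▸ hlt) hH' rfl

end IsSeed

lemma IsWindow.exists_charges
    (harborth : ∀ Q : Finset Pt, Q.card = 10 → GenPos Q → (Holes5 Q).Nonempty)
    (hP : GenPos P) (hp : p ∈ extremePts (P : Set Pt)) (hW : IsWindow P p W)
    (hcard : W.card = 10) : ∃ H ∈ Holes5 (P : Set Pt), Charges P p H ∧ ¬ Disjoint H W := by
  obtain ⟨H, hH⟩ := harborth W hcard (hP.mono (by exact_mod_cast hW.subset))
  exact (IsSeed.of_window hp hW hcard.le hH).exists_charges harborth hP hp hW

end Descent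

section Counting

variable {p : Pt} {P H : Finset Pt} {n : ℕ}

/-- The 5-holes of a finite point set as a `Finset`, for double counting. -/
def holes5Finset (P : Finset Pt) : Finset (Finset Pt) := {H ∈ P.powerset | H ∈ Holes5 (P : Set Pt)}

lemma mem_holes5Finset : H ∈ holes5Finset P ↔ H ∈ Holes5 (P : Set Pt) := by
  simp only [holes5Finset, Finset.mem_filter, Finset.mem_powerset, and_iff_right_iff_imp]
  exact fun h ↦ by exact_mod_cast h.2.1

lemma coe_holes5Finset (P : Finset Pt) : (holes5Finset P : Set (Finset Pt)) = Holes5 (P : Set Pt) :=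
  Set.ext fun _ ↦ mem_holes5Finset

lemma ncard_holes5 (P : Finset Pt) : (Holes5 (P : Set Pt)).ncard = (holes5Finset P).card := by
  rw [← coe_holes5Finset, Set.ncard_coe_finset]

lemma isWindow_image_of_ordConnected {f : Fin n ≃ P.erase p}
    (hf : ∀ i j, i < j → Turn 1 p (f i) (f j)) {I : Finset (Fin n)}
    (hI : (I : Set (Fin n)).OrdConnected) (hne : I.Nonempty) :
    IsWindow P p (I.image fun i ↦ (f i : Pt)) where
  subset := Finset.image_subset_iff.2 fun i _ ↦ Finset.mem_of_mem_erase (f i).2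
  notMem := by
    intro hp
    obtain ⟨i, -, hi⟩ := Finset.mem_image.1 hp
    exact Finset.ne_of_mem_erase (f i).2 hi
  nonempty := hne.image _
  mem_or_precedes := by
    intro x hx hxp
    obtain ⟨j, hj⟩ := f.surjective ⟨x, Finset.mem_erase.2 ⟨hxp, hx⟩⟩
    obtain rfl : (f j : Pt) = x := congrArg Subtype.val hj
    simp only [Precedes, Finset.forall_mem_image]
    by_cases hjI : j ∈ I
    · exact .inl (Finset.mem_image_of_mem _ hjI)
    refine .inr ?_
    by_cases hlt : ∀ i ∈ I, j < i
    · exact ⟨1, fun i hi ↦ hf j i (hlt i hi)⟩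
    push Not at hlt
    obtain ⟨k, hk, hkj⟩ := hlt
    refine ⟨-1, fun i hi ↦ turn_neg.2 (hf i j ?_)⟩
    by_contra! hji
    exact hjI (hI.out hk hi ⟨hkj, hji⟩)

lemma exists_equiv_erase_turn (hP : GenPos P) (hp : p ∈ extremePts (P : Set Pt)) :
    ∃ f : Fin (P.card - 1) ≃ P.erase p, ∀ i j, i < j → Turn 1 p (f i) (f j) := by
  obtain ⟨u, hu⟩ := exists_turn_of_mem_extremePts P.finite_toSet hp
  exact hP.exists_equiv_turn hp.1 (by exact_mod_cast Finset.erase_subset p P)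
    (fun w hw ↦ hu w (Finset.mem_of_mem_erase hw) (Finset.ne_of_mem_erase hw)) 1
    (Finset.card_erase_of_mem hp.1)

lemma card_sub_le_card_charges
    (harborth : ∀ Q : Finset Pt, Q.card = 10 → GenPos Q → (Holes5 Q).Nonempty)
    (hP : GenPos P) (hp : p ∈ extremePts (P : Set Pt)) :
    P.card - 10 ≤ 50 * {H ∈ holes5Finset P | Charges P p H}.card := by
  obtain ⟨f, hf⟩ := exists_equiv_erase_turn hP hp
  let U : Finset Pt := {H ∈ holes5Finset P | Charges P p H}.biUnion id
  let J : Finset (Fin (P.card - 1)) := {j | (f j : Pt) ∈ U}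
  have hinj : Function.Injective fun j ↦ (f j : Pt) := Subtype.val_injective.comp f.injective
  have hU : U.card ≤ {H ∈ holes5Finset P | Charges P p H}.card * 5 :=
    Finset.card_biUnion_le_card_mul _ _ _ fun H hH ↦
      (mem_holes5Finset.1 (Finset.mem_filter.1 hH).1).1.le
  have hJU : J.card ≤ U.card :=
    Finset.card_le_card_of_injOn (fun j ↦ (f j : Pt)) (fun j hj ↦ (Finset.mem_filter.1 hj).2)
      hinj.injOn
  have hblocks : Finset.range ((P.card - 1) / 10) ⊆
      J.image fun j : Fin (P.card - 1) ↦ (j : ℕ) / 10 := by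
    intro i hi
    rw [Finset.mem_range] at hi
    let I : Finset (Fin (P.card - 1)) := (Finset.Ico (10 * i) (10 * i + 10)).attachFin
      fun j hj ↦ by rw [Finset.mem_Ico] at hj; omega
    have hmemI (j) : j ∈ I ↔ 10 * i ≤ (j : ℕ) ∧ (j : ℕ) < 10 * i + 10 := by
      rw [Finset.mem_attachFin, Finset.mem_Ico]
    have hI : I.card = 10 := by simp [I]
    have hIord : (I : Set (Fin (P.card - 1))).OrdConnected := by
      refine ⟨fun j hj k hk l hl ↦ ?_⟩
      rw [Finset.mem_coe, hmemI] at hj hk ⊢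
      exact ⟨hj.1.trans (Fin.le_def.1 hl.1), (Fin.le_def.1 hl.2).trans_lt hk.2⟩
    have hW := isWindow_image_of_ordConnected hf hIord (Finset.card_pos.1 (by omega))
    obtain ⟨H, hH, hpH, hHW⟩ := hW.exists_charges harborth hP hp
      ((Finset.card_image_of_injective _ hinj).trans hI)
    obtain ⟨x, hxH, hxW⟩ := Finset.not_disjoint_iff.1 hHW
    obtain ⟨j, hj, rfl⟩ := Finset.mem_image.1 hxW
    have hjU : (f j : Pt) ∈ U := Finset.mem_biUnion.2
      ⟨H, Finset.mem_filter.2 ⟨mem_holes5Finset.2 hH, hpH⟩, hxH⟩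
    exact Finset.mem_image.2 ⟨j, by simpa [J] using hjU, by have := (hmemI j).1 hj; omega⟩
  have hcard := (Finset.card_le_card hblocks).trans Finset.card_image_le
  rw [Finset.card_range] at hcard
  omega

lemma card_filter_charges_le (hP : GenPos P) (hH : H ⊆ P) :
    {p ∈ P | Charges P p H}.card ≤ H.card + H.card ^ 2 * 24 := by
  let near (q : Pt × Pt) : Finset Pt :=
    {p ∈ P | Near P 11 1 q.1 p q.2} ∪ {p ∈ P | Near P 11 (-1) q.1 p q.2}
  have hnear : ∀ q ∈ H ×ˢ H, (near q).card ≤ 24 := fun q hq ↦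
    have hq₁ := hH (Finset.mem_product.1 hq).1
    (Finset.card_union_le _ _).trans (add_le_add (card_near_le hP hq₁) (card_near_le hP hq₁))
  have hsub : {p ∈ P | Charges P p H} ⊆ H ∪ (H ×ˢ H).biUnion near := by
    intro p hp
    obtain ⟨hpP, hpH | ⟨e, x, hx, z, hz, hn⟩⟩ := Finset.mem_filter.1 hp
    · exact Finset.mem_union_left _ hpH
    · refine Finset.mem_union_right _ <|
        Finset.mem_biUnion.2 ⟨(x, z), Finset.mk_mem_product hx hz, ?_⟩
      rcases Int.units_eq_one_or e with rfl | rfl <;> simp [near, hpP, hn]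
  calc {p ∈ P | Charges P p H}.card ≤ H.card + ((H ×ˢ H).biUnion near).card :=
        (Finset.card_le_card hsub).trans (Finset.card_union_le _ _)
    _ ≤ H.card + H.card ^ 2 * 24 := by
        rw [sq, ← Finset.card_product]
        gcongr
        exact Finset.card_biUnion_le_card_mul _ _ _ hnear

lemma ncard_extremePts_mul_card_sub_le
    (harborth : ∀ Q : Finset Pt, Q.card = 10 → GenPos Q → (Holes5 Q).Nonempty)
    (hP : GenPos P) :
    (extremePts (P : Set Pt)).ncard * (P.card - 10) ≤ 30250 * (Holes5 (P : Set Pt)).ncard := by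
  have hE : (extremePts (P : Set Pt)).Finite := P.finite_toSet.subset extremePts_subset
  have hEP : hE.toFinset ⊆ P := fun p hp ↦ extremePts_subset (hE.mem_toFinset.1 hp)
  have habove : ∀ p ∈ hE.toFinset,
      P.card - 10 ≤ 50 * ((holes5Finset P).bipartiteAbove (Charges P) p).card := fun p hp ↦
    card_sub_le_card_charges harborth hP (hE.mem_toFinset.1 hp)
  have hbelow : ∀ H ∈ holes5Finset P, (hE.toFinset.bipartiteBelow (Charges P) H).card ≤ 605 := by
    intro H hH
    obtain ⟨hcard, hHP, -⟩ := mem_holes5Finset.1 hH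
    have hle := card_filter_charges_le hP (Finset.coe_subset.1 hHP)
    rw [hcard] at hle
    exact (Finset.card_le_card (Finset.filter_subset_filter _ hEP)).trans hle
  rw [Set.ncard_eq_toFinset_card _ hE, ncard_holes5]
  calc hE.toFinset.card * (P.card - 10)
      ≤ ∑ p ∈ hE.toFinset, 50 * ((holes5Finset P).bipartiteAbove (Charges P) p).card :=
        Finset.card_nsmul_le_sum _ _ _ habove
    _ = 50 * ∑ H ∈ holes5Finset P, (hE.toFinset.bipartiteBelow (Charges P) H).card := by
        rw [← Finset.mul_sum, Finset.sum_card_bipartiteAbove_eq_sum_card_bipartiteBelow]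
    _ ≤ 50 * ((holes5Finset P).card * 605) := by
        gcongr
        exact Finset.sum_le_card_nsmul _ _ _ hbelow
    _ = 30250 * (holes5Finset P).card := by ring

end Counting

section Layers

variable {P : Set Pt} {m : ℕ}

lemma ncard_extremePts_mul_ncard_le
    (harborth : ∀ Q : Finset Pt, Q.card = 10 → GenPos Q → (Holes5 Q).Nonempty)
    (hfin : P.Finite) (hP : GenPos P) (hm : 0 < m) (hholes : (Holes5 P).ncard ≤ m) :
    (extremePts P).ncard * P.ncard ≤ 60500 * m := by
  lift P to Finset Pt using hfin
  have hmul := ncard_extremePts_mul_card_sub_le harborth hP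
  have hle := Set.ncard_le_ncard (extremePts_subset (P := (P : Set Pt))) P.finite_toSet
  rw [Set.ncard_coe_finset] at hle ⊢
  rcases lt_or_ge P.card 20 with h20 | h20
  · nlinarith
  · have : P.card ≤ 2 * (P.card - 10) := by omega
    nlinarith

lemma isIsland_layerRest (P : Set Pt) (i : ℕ) : IsIsland (layerRest P i) P := by
  induction i with
  | zero => exact .refl P
  | succ i ih => exact (isIsland_sdiff_of_subset_extremePts subset_rfl).trans ih

lemma layerRest_antitone (P : Set Pt) : Antitone (layerRest P) :=
  antitone_nat_of_succ_le fun _ ↦ Set.sdiff_subset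

lemma ncard_layerRest_succ_add (hfin : P.Finite) (i : ℕ) :
    (layerRest P (i + 1)).ncard + (layer P i).ncard = (layerRest P i).ncard :=
  Set.ncard_sdiff_add_ncard_of_subset extremePts_subset (hfin.subset (isIsland_layerRest P i).1)

lemma layer_nonempty (hfin : P.Finite) {i : ℕ} (h : (layerRest P i).Nonempty) :
    (layer P i).Nonempty :=
  extremePts_nonempty (hfin.subset (isIsland_layerRest P i).1) h

lemma ncard_layerRest_add_le (hfin : P.Finite) {i : ℕ} (h : (layerRest P i).Nonempty) :
    (layerRest P i).ncard + i ≤ P.ncard := by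
  induction i with
  | zero => exact le_rfl
  | succ i ih =>
    have hi := h.mono (layerRest_antitone P i.le_succ)
    have hlayer : 0 < (layer P i).ncard := (Set.ncard_pos <| hfin.subset <|
      extremePts_subset.trans (isIsland_layerRest P i).1).2 (layer_nonempty hfin hi)
    have := ncard_layerRest_succ_add hfin i
    have := ih hi
    omega

lemma layerRest_numLayers (hfin : P.Finite) : layerRest P (numLayers P) = ∅ := by
  by_contra hne
  have hsub : Set.Iic (numLayers P) ⊆ {i | (layer P i).Nonempty} := fun i hi ↦
    layer_nonempty hfin <| (Set.nonempty_iff_ne_empty.2 hne).mono (layerRest_antitone P hi)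
  have hbdd : {i | (layer P i).Nonempty}.Finite := (Set.finite_Iic P.ncard).subset fun i hi ↦
    (Nat.le_add_left _ _).trans (ncard_layerRest_add_le hfin (hi.mono extremePts_subset))
  have hcard := Set.ncard_le_ncard hsub hbdd
  rw [← Finset.coe_Iic, Set.ncard_coe_finset, Nat.card_Iic] at hcard
  exact Nat.not_succ_le_self _ hcard

lemma sq_ncard_le_add_of_layer (hfin : P.Finite)
    (h : ∀ i, (layer P i).ncard * (layerRest P i).ncard ≤ m) (t : ℕ) :
    P.ncard ^ 2 ≤ (layerRest P t).ncard ^ 2 + 2 * t * m := by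
  induction t with
  | zero => exact Nat.le_add_right _ _
  | succ t ih =>
    have := ncard_layerRest_succ_add hfin t
    nlinarith [h t]

lemma sq_ncard_le_numLayers_mul (hfin : P.Finite)
    (h : ∀ i, (layer P i).ncard * (layerRest P i).ncard ≤ m) :
    P.ncard ^ 2 ≤ 2 * numLayers P * m := by
  simpa [layerRest_numLayers hfin] using sq_ncard_le_add_of_layer hfin h (numLayers P)

end Layers

/-- assuming Harborth's theorem, there is an absolute constant
`c > 0` such that every set `P` of `n ≥ 10` points in general position
determines at least `c·n²/L(P)` 5-holes, where `L(P)` is the number of convex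
layers, and also at least `c·|ℓ₁|·n` 5-holes, where `ℓ₁` is the outermost
layer (the extreme points of `P`). -/
theorem stmt18
    (harborth : ∀ Q : Finset Pt, Q.card = 10 → GenPos ↑Q → (Holes5 ↑Q).Nonempty) :
    ∃ c : ℝ, 0 < c ∧ ∀ P : Finset Pt, GenPos ↑P → 10 ≤ P.card →
      c * (P.card : ℝ) ^ 2 / (numLayers (↑P : Set Pt) : ℝ) ≤
        ((Holes5 (↑P : Set Pt)).ncard : ℝ) ∧
      c * ((extremePts (↑P : Set Pt)).ncard : ℝ) * (P.card : ℝ) ≤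
        ((Holes5 (↑P : Set Pt)).ncard : ℝ) := by
  refine ⟨1 / 121000, by norm_num, fun P hP hcard ↦ ?_⟩
  set h := (Holes5 (P : Set Pt)).ncard
  have hfin : (Holes5 (P : Set Pt)).Finite := by
    rw [← coe_holes5Finset]
    exact Finset.finite_toSet _
  have hpos : 0 < h := (Set.ncard_pos hfin).2 (holes5_nonempty_of_le_card harborth P hP hcard)
  have hisland {Q : Set Pt} (hQ : IsIsland Q P) : (extremePts Q).ncard * Q.ncard ≤ 60500 * h :=
    ncard_extremePts_mul_ncard_le harborth (P.finite_toSet.subset hQ.1) (hP.mono hQ.1) hpos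
      (Set.ncard_le_ncard hQ.holes5_subset hfin)
  have hlayers := sq_ncard_le_numLayers_mul P.finite_toSet fun i ↦ hisland (isIsland_layerRest P i)
  have hextreme := hisland (.refl P)
  rw [Set.ncard_coe_finset] at hlayers hextreme
  rify at hlayers hextreme
  constructor
  · exact div_le_of_le_mul₀ (by positivity) (by positivity) (by linarith)
  · linarith
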